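/- arXiv:1902.06669 — 3 statements merged into one kernel-verified Lean document; each statement's English description precedes it below -/
import Mathlib

section
/- Let ν, κ ≥ 0 with ν + κ > 0, ω ∈ ℝ with ω ≠ 0, k ∈ ℝ, γ ∈ (0, π/2), and let λ = iμ with μ ∈ ℝ be purely imaginary. Then the imaginary part of det A_{ν,κ,ω,k}(iμ) equals −ω(ν + κ)(k² + μ²)². In particular, if (k, μ) ≠ (0, 0), then det A_{ν,κ,ω,k}(iμ) ≠ 0, i.e. det A_{ν,κ,ω,k} has no purely imaginary roots other than possibly λ = 0 in the case k = 0. -/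
open Complex Matrix

/-- The matrix `A_{ν,κ,ω,k}(λ)` of the modal problem for the linear viscous
Boussinesq system in slope coordinates (Brunt–Väisälä frequency `N = 1`). -/
noncomputable def boussinesqModalMatrix (ν κ ω k γ : ℝ) (l : ℂ) : Matrix (Fin 4) (Fin 4) ℂ :=
  !![-I * (ω : ℂ) + (ν : ℂ) * ((k : ℂ) ^ 2 - l ^ 2), 0, -(Real.sin γ : ℂ), I * (k : ℂ);
     0, -I * (ω : ℂ) + (ν : ℂ) * ((k : ℂ) ^ 2 - l ^ 2), -(Real.cos γ : ℂ), -l;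
     (Real.sin γ : ℂ), (Real.cos γ : ℂ), -I * (ω : ℂ) + (κ : ℂ) * ((k : ℂ) ^ 2 - l ^ 2), 0;
     I * (k : ℂ), -l, 0, 0]

/-!
Expanding the determinant gives
`det A(λ) = (-iω + ν p) (-iω + κ p) p - (λ sin γ + i k cos γ)²` with `p = k² - λ²`.
For `λ = iμ` both `p = k² + μ²` and the last square are real, so the imaginary part comes only
from the cross terms `-iω (ν + κ) p` of the first product, multiplied by `p`, and vanishes
only where `p` does.
-/

theorem det_fin_four_of_scalar_block {R : Type*} [CommRing R] (a b p q r s x y z w : R) :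
    !![a, 0, p, x;
       0, a, q, y;
       r, s, b, 0;
       z, w, 0, 0].det = (p * y - q * x) * (r * w - s * z) - a * b * (x * z + y * w) := by
  have expand_last_row : !![a, 0, p, x; 0, a, q, y; r, s, b, 0; z, w, 0, 0].det =
      w * !![a, p, x; 0, q, y; r, b, 0].det - z * !![0, p, x; a, q, y; s, b, 0].det := by
    rw [det_succ_row _ 3, Fin.sum_univ_four]
    have minor₀ : submatrix !![a, 0, p, x; 0, a, q, y; r, s, b, 0; z, w, 0, 0]
        (Fin.succAbove 3) (Fin.succAbove 0) = !![0, p, x; a, q, y; s, b, 0] := by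
      ext i j
      fin_cases i <;> fin_cases j <;> rfl
    have minor₁ : submatrix !![a, 0, p, x; 0, a, q, y; r, s, b, 0; z, w, 0, 0]
        (Fin.succAbove 3) (Fin.succAbove 1) = !![a, p, x; 0, q, y; r, b, 0] := by
      ext i j
      fin_cases i <;> fin_cases j <;> rfl
    rw [minor₀, minor₁]
    simp only [of_apply, cons_val', cons_val, Fin.coe_ofNat_eq_mod]
    ring
  rw [expand_last_row]
  simp only [det_fin_three, of_apply, cons_val', cons_val]
  ring

theorem det_boussinesqModalMatrix (ν κ ω k γ : ℝ) (l : ℂ) :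
    (boussinesqModalMatrix ν κ ω k γ l).det =
      (-I * ω + ν * (k ^ 2 - l ^ 2)) * (-I * ω + κ * (k ^ 2 - l ^ 2)) * (k ^ 2 - l ^ 2)
        - (l * Real.sin γ + I * k * Real.cos γ) ^ 2 := by
  rw [boussinesqModalMatrix, det_fin_four_of_scalar_block]
  have hp : I * (k : ℂ) * (I * k) + -l * -l = -(k ^ 2 - l ^ 2) := by
    linear_combination (k : ℂ) ^ 2 * I_sq
  rw [hp]
  ring

theorem det_boussinesqModalMatrix_I_mul (ν κ ω k γ μ : ℝ) :
    (boussinesqModalMatrix ν κ ω k γ (I * μ)).det =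
      (((ν * κ * (k ^ 2 + μ ^ 2) ^ 2 - ω ^ 2) * (k ^ 2 + μ ^ 2)
          + (μ * Real.sin γ + k * Real.cos γ) ^ 2 : ℝ) : ℂ)
        + ((-ω * (ν + κ) * (k ^ 2 + μ ^ 2) ^ 2 : ℝ) : ℂ) * I := by
  have hp : (k : ℂ) ^ 2 - (I * μ) ^ 2 = k ^ 2 + μ ^ 2 := by
    linear_combination -(μ : ℂ) ^ 2 * I_sq
  rw [det_boussinesqModalMatrix, hp]
  push_cast
  linear_combination
    ((ω : ℂ) ^ 2 * (k ^ 2 + μ ^ 2) - (μ * Complex.sin γ + k * Complex.cos γ) ^ 2) * I_sq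

theorem im_det_boussinesqModalMatrix_I_mul (ν κ ω k γ μ : ℝ) :
    (boussinesqModalMatrix ν κ ω k γ (I * μ)).det.im = -ω * (ν + κ) * (k ^ 2 + μ ^ 2) ^ 2 := by
  rw [det_boussinesqModalMatrix_I_mul, add_im, ofReal_im, im_ofReal_mul, I_im, mul_one, zero_add]

theorem det_boussinesqModalMatrix_im_of_purely_imaginary_general
    (ν κ ω k γ μ : ℝ) (hνκ : ν + κ ≠ 0) (hω : ω ≠ 0) :
    (boussinesqModalMatrix ν κ ω k γ (I * μ)).det.im = -ω * (ν + κ) * (k ^ 2 + μ ^ 2) ^ 2 ∧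
      ((boussinesqModalMatrix ν κ ω k γ (I * μ)).det = 0 ↔ (k, μ) = (0, 0)) := by
  have him := im_det_boussinesqModalMatrix_I_mul ν κ ω k γ μ
  refine ⟨him, fun hdet => ?_, fun hkμ => ?_⟩
  · have hsum : k ^ 2 + μ ^ 2 = 0 := by simpa [hdet, hω, hνκ] using him
    rw [add_eq_zero_iff_of_nonneg (sq_nonneg k) (sq_nonneg μ), sq_eq_zero_iff,
      sq_eq_zero_iff] at hsum
    exact Prod.ext hsum.1 hsum.2
  · obtain ⟨rfl, rfl⟩ := Prod.mk.inj hkμ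
    simp [det_boussinesqModalMatrix]

/-- **No purely imaginary roots of the modal determinant.**
For `λ = iμ` purely imaginary, `Im (det A_{ν,κ,ω,k}(iμ)) = −ω(ν + κ)(k² + μ²)²`; in
particular `det A_{ν,κ,ω,k}(iμ) ≠ 0` as soon as `(k, μ) ≠ (0, 0)`. -/
theorem det_boussinesqModalMatrix_im_of_purely_imaginary
    (ν κ ω k γ μ : ℝ) (hν : 0 ≤ ν) (hκ : 0 ≤ κ) (hνκ : 0 < ν + κ) (hω : ω ≠ 0)
    (hγ : γ ∈ Set.Ioo 0 (Real.pi / 2)) :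
    ((boussinesqModalMatrix ν κ ω k γ (I * (μ : ℂ))).det).im
        = -ω * (ν + κ) * (k ^ 2 + μ ^ 2) ^ 2 ∧
      ((k, μ) ≠ (0, 0) →
        (boussinesqModalMatrix ν κ ω k γ (I * (μ : ℂ))).det ≠ 0) :=
  (det_boussinesqModalMatrix_im_of_purely_imaginary_general ν κ ω k γ μ hνκ.ne' hω).imp_right
    fun hdet => mt hdet.mp
end

section
/- Let ν, κ ≥ 0, ω, k ∈ ℝ with k ≠ 0, γ ∈ (0, π/2), and λ ∈ ℂ with λ ≠ 0 and iω + κ(λ² − k²) ≠ 0. If det A_{ν,κ,ω,k}(λ) = 0, then the vector (U_λ, W_λ, B_λ, P_λ) with U_λ = 1, W_λ = ik/λ, B_λ = (sin γ + (ik/λ) cos γ)/(iω + κ(λ² − k²)), P_λ = (1/(ik))[iω + ν(λ² − k²) + sin γ · (sin γ + (ik/λ) cos γ)/(iω + κ(λ² − k²))] lies in the kernel of A_{ν,κ,ω,k}(λ). -/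
/-!
The displayed vector is, up to the nonzero factor `ik · λ · (iω + κ(λ² − k²))`, the second column
of the adjugate of `A`. Since `A * adj A = det A • 1`, applying `A` to it gives a nonzero multiple
of `det A` times the second basis vector: three rows vanish identically, and the remaining one is
the dispersion relation.
-/

open Complex Matrix

/-- The modal matrix over an arbitrary ring, with its symbols as independent variables so that its
minors are polynomials in them: `m` stands for `iω + ν(λ² − k²)` (momentum), `b` for
`iω + κ(λ² − k²)` (buoyancy), `s` and `c` for `sin γ` and `cos γ`, `q` for `ik` and `l` for `λ`. -/
def modalMatrix {R : Type*} [Ring R] (m b s c q l : R) : Matrix (Fin 4) (Fin 4) R :=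
  !![-m, 0, -s, q;
     0, -m, -c, -l;
     s, c, -b, 0;
     q, -l, 0, 0]

theorem boussinesqModalMatrix_eq_modalMatrix (ν κ ω k γ : ℝ) (l : ℂ) :
    boussinesqModalMatrix ν κ ω k γ l =
      modalMatrix (I * ω + ν * (l ^ 2 - k ^ 2)) (I * ω + κ * (l ^ 2 - k ^ 2))
        (Real.sin γ : ℂ) (Real.cos γ : ℂ) (I * k) l := by
  have neg_symbol (a : ℂ) :
      -I * ω + a * ((k : ℂ) ^ 2 - l ^ 2) = -(I * ω + a * (l ^ 2 - (k : ℂ) ^ 2)) := by ring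
  rw [boussinesqModalMatrix, modalMatrix, neg_symbol, neg_symbol]

theorem cramer_modalMatrix_single_one {R : Type*} [CommRing R] (m b s c q l : R) :
    cramer (modalMatrix m b s c q l) (Pi.single 1 1) =
      ![q * l * b, q ^ 2 * b, q * (s * l + q * c), m * b * l + s * (s * l + q * c)] := by
  rw [cramer_eq_adjugate_mulVec, mulVec_single_one]
  ext i
  rw [col_apply, adjugate_fin_succ_eq_det_submatrix, det_fin_three]
  fin_cases i <;> simp [modalMatrix, Fin.succAbove] <;> ring

theorem boussinesqModalMatrix_mulVec_eigenvector_general {K : Type*} [Field K] {m b s c q l : K}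
    (hb : b ≠ 0) (hq : q ≠ 0) (hl : l ≠ 0) :
    modalMatrix m b s c q l *ᵥ
        ![1, q / l, (s + q / l * c) / b, 1 / q * (m + s * ((s + q * l⁻¹ * c) / b))] = 0 ↔
      (modalMatrix m b s c q l).det = 0 := by
  have eigenvector_eq_smul_cramer :
      ![1, q / l, (s + q / l * c) / b, 1 / q * (m + s * ((s + q * l⁻¹ * c) / b))] =
        (q * l * b)⁻¹ • cramer (modalMatrix m b s c q l) (Pi.single 1 1) := by
    simp only [cramer_modalMatrix_single_one, smul_cons, smul_empty, smul_eq_mul]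
    congrm ![?_, ?_, ?_, ?_] <;> field_simp
  rw [eigenvector_eq_smul_cramer, mulVec_smul, mulVec_cramer]
  simp [hb, hq, hl]

/-- **Explicit kernel vector of the modal matrix.**
If `det A_{ν,κ,ω,k}(λ) = 0` (with `k ≠ 0`, `λ ≠ 0`, `iω + κ(λ² − k²) ≠ 0`), then
`(U_λ, W_λ, B_λ, P_λ)` as displayed lies in the kernel of `A_{ν,κ,ω,k}(λ)`. -/
theorem boussinesqModalMatrix_mulVec_eigenvector
    (ν κ ω k γ : ℝ) (hν : 0 ≤ ν) (hκ : 0 ≤ κ) (hk : k ≠ 0)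
    (hγ : γ ∈ Set.Ioo 0 (Real.pi / 2)) (l : ℂ) (hl : l ≠ 0)
    (hden : I * (ω : ℂ) + (κ : ℂ) * (l ^ 2 - (k : ℂ) ^ 2) ≠ 0)
    (hdet : (boussinesqModalMatrix ν κ ω k γ l).det = 0) :
    (boussinesqModalMatrix ν κ ω k γ l).mulVec
      ![1,
        I * (k : ℂ) / l,
        ((Real.sin γ : ℂ) + (I * (k : ℂ) / l) * (Real.cos γ : ℂ)) /
          (I * (ω : ℂ) + (κ : ℂ) * (l ^ 2 - (k : ℂ) ^ 2)),
        (1 / (I * (k : ℂ))) *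
          (I * (ω : ℂ) + (ν : ℂ) * (l ^ 2 - (k : ℂ) ^ 2) +
            (Real.sin γ : ℂ) * (((Real.sin γ : ℂ) + I * (k : ℂ) * l⁻¹ * (Real.cos γ : ℂ)) /
              (I * (ω : ℂ) + (κ : ℂ) * (l ^ 2 - (k : ℂ) ^ 2))))] = 0 := by
  rw [boussinesqModalMatrix_eq_modalMatrix] at hdet ⊢
  exact (boussinesqModalMatrix_mulVec_eigenvector_general hden
    (mul_ne_zero I_ne_zero (ofReal_ne_zero.mpr hk)) hl).mpr hdet
end

section
/- Let γ ∈ (0, π/2), δ ≥ 0, ν₀, κ₀ > 0, ε > 0, T > 0. Let 𝒲 = (u, w, b) with pressure p, and 𝒲_a = (u_a, w_a, b_a) with pressure p_a, be smooth, spatially decaying vector fields on [0, T] × ℝ × [0, ∞), both divergence free (∂_x u + ∂_y w = 0, ∂_x u_a + ∂_y w_a = 0) and both satisfying the boundary conditions u = w = 0, ∂_y b = 0 and u_a = w_a = 0, ∂_y b_a = 0 at y = 0. Suppose 𝒲 solves exactly the system ∂_t u + δ(u∂_x + w∂_y)u − sin γ·b + ∂_x p = ν₀ε⁶Δu, ∂_t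 w + δ(u∂_x + w∂_y)w − cos γ·b + ∂_y p = ν₀ε⁶Δw, ∂_t b + δ(u∂_x + w∂_y)b + sin γ·u + cos γ·w = κ₀ε⁶Δb, while 𝒲_a solves the same system with an additional remainder R = (R_u, R_w, R_b) on the right-hand sides of the three evolution equations. Then for all t ∈ [0, T]: ‖(𝒲_a − 𝒲)(t)‖²_{L²(ℝ×(0,∞))} ≤ ( ‖(𝒲_a − 𝒲)(0)‖²_{L²} + ∫₀ᵗ ‖R(s)‖²_{L²} ds ) · exp( ∫₀ᵗ ( 2δ‖∇𝒲_a(s)‖_{L^∞(ℝ×(0,∞))} + 1 ) ds ). -/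
open Real MeasureTheory Function

/-- Partial derivative in the tangential variable `x`. -/
noncomputable def pdx (f : ℝ × ℝ → ℝ) (q : ℝ × ℝ) : ℝ := fderiv ℝ f q (1, 0)

/-- Partial derivative in the normal variable `y`. -/
noncomputable def pdy (f : ℝ × ℝ → ℝ) (q : ℝ × ℝ) : ℝ := fderiv ℝ f q (0, 1)

/-- Laplacian in the spatial variables. -/
noncomputable def lap (f : ℝ × ℝ → ℝ) (q : ℝ × ℝ) : ℝ := pdx (pdx f) q + pdy (pdy f) q

/-- Lebesgue measure restricted to the half-plane `{y > 0}`. -/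
noncomputable def halfPlane : Measure (ℝ × ℝ) := volume.restrict {q : ℝ × ℝ | 0 < q.2}

/-- `f`, its first and second spatial derivatives and its first time derivative are
bounded on `[0, T]` by `C (1 + ‖q‖)⁻⁴`; this expresses smoothness with integrability
uniform in time and decay at spatial infinity. -/
def DecaysUniformly (T C : ℝ) (f : ℝ → ℝ × ℝ → ℝ) : Prop :=
  ∀ t ∈ Set.Icc 0 T, ∀ q : ℝ × ℝ,
    |f t q| ≤ C / (1 + ‖q‖) ^ 4 ∧
    ‖fderiv ℝ (f t) q‖ ≤ C / (1 + ‖q‖) ^ 4 ∧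
    ‖fderiv ℝ (fun q' => fderiv ℝ (f t) q') q‖ ≤ C / (1 + ‖q‖) ^ 4 ∧
    |deriv (fun s => f s q) t| ≤ C / (1 + ‖q‖) ^ 4

/-!
The difference `e = 𝒲ₐ - 𝒲` satisfies a linear system forced by `R`, which is tested against `e`.
Green's formula removes the pressure and the transport of `e` by the exact velocity (divergence
free, zero normal trace) and makes the diffusion terms nonpositive (Dirichlet or Neumann trace);
the skew-symmetric buoyancy coupling cancels pointwise. What is left is the stretching
`δ (e · ∇) 𝒲ₐ`, which Cauchy–Schwarz bounds by `δ |∇𝒲ₐ| |e|²`, and the remainder, absorbed by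
`2 e · R ≤ |e|² + |R|²`. Gronwall's lemma concludes.
-/

section Gronwall

lemma hasDerivAt_intervalIntegral_of_continuousOn {E : Type*} [NormedAddCommGroup E]
    [NormedSpace ℝ E] [CompleteSpace E] {f : ℝ → E} {a b t : ℝ}
    (hf : ContinuousOn f (Set.Icc a b)) (ht : t ∈ Set.Ioo a b) :
    HasDerivAt (fun s => ∫ x in a..s, f x) (f t) t := by
  have hnhds : Set.Icc a b ∈ nhds t := Icc_mem_nhds ht.1 ht.2
  have hint : IntervalIntegrable f volume a t :=
    (hf.mono (Set.Icc_subset_Icc_right ht.2.le)).intervalIntegrable_of_Icc ht.1.le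
  exact intervalIntegral.integral_hasDerivAt_right hint
    ⟨_, hnhds, hf.aestronglyMeasurable measurableSet_Icc⟩ (hf.continuousAt hnhds)

lemma continuousOn_intervalIntegral_of_continuousOn {E : Type*} [NormedAddCommGroup E]
    [NormedSpace ℝ E] {f : ℝ → E} {a b : ℝ} (hab : a ≤ b) (hf : ContinuousOn f (Set.Icc a b)) :
    ContinuousOn (fun s => ∫ x in a..s, f x) (Set.Icc a b) := by
  rw [← Set.uIcc_of_le hab] at hf ⊢
  exact intervalIntegral.continuousOn_primitive_interval hf.integrableOn_uIcc

theorem gronwall_integral_le {φ φ' k ρ : ℝ → ℝ} {a b : ℝ}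
    (hφ : ContinuousOn φ (Set.Icc a b)) (hφ' : ∀ t ∈ Set.Ioo a b, HasDerivAt φ (φ' t) t)
    (hk : ContinuousOn k (Set.Icc a b)) (hk0 : ∀ t ∈ Set.Icc a b, 0 ≤ k t)
    (hρ : ContinuousOn ρ (Set.Icc a b)) (hρ0 : ∀ t ∈ Set.Icc a b, 0 ≤ ρ t)
    (hle : ∀ t ∈ Set.Ioo a b, φ' t ≤ k t * φ t + ρ t) {t : ℝ} (ht : t ∈ Set.Icc a b) :
    φ t ≤ (φ a + ∫ s in a..t, ρ s) * Real.exp (∫ s in a..t, k s) := by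
  have hab : a ≤ b := ht.1.trans ht.2
  set K : ℝ → ℝ := fun s => ∫ x in a..s, k x
  set P : ℝ → ℝ := fun s => ∫ x in a..s, ρ x
  have hanti : AntitoneOn (fun s => φ s * Real.exp (-K s) - P s) (Set.Icc a b) := by
    refine antitoneOn_of_hasDerivWithinAt_nonpos (convex_Icc a b)
      (f' := fun s => φ' s * Real.exp (-K s) + φ s * (Real.exp (-K s) * -k s) - ρ s)
      ?_ (fun s hs => ?_) fun s hs => ?_
    · exact (hφ.mul (continuousOn_intervalIntegral_of_continuousOn hab hk).neg.rexp).sub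
        (continuousOn_intervalIntegral_of_continuousOn hab hρ)
    · rw [interior_Icc] at hs
      exact (((hφ' s hs).mul (hasDerivAt_intervalIntegral_of_continuousOn hk hs).neg.exp).sub
        (hasDerivAt_intervalIntegral_of_continuousOn hρ hs)).hasDerivWithinAt
    · rw [interior_Icc] at hs
      have hexp_le : Real.exp (-K s) ≤ 1 := Real.exp_le_one_iff.2 <| neg_nonpos.2 <|
        intervalIntegral.integral_nonneg hs.1.le fun x hx => hk0 x ⟨hx.1, hx.2.trans hs.2.le⟩
      calc φ' s * Real.exp (-K s) + φ s * (Real.exp (-K s) * -k s) - ρ s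
          = (φ' s - k s * φ s) * Real.exp (-K s) - ρ s := by ring
        _ ≤ ρ s * Real.exp (-K s) - ρ s := by
          gcongr
          linarith [hle s hs]
        _ ≤ 0 := sub_nonpos.2 <|
          mul_le_of_le_one_right (hρ0 s (Set.Ioo_subset_Icc_self hs)) hexp_le
  have hKP : φ t * Real.exp (-K t) ≤ φ a + P t := by
    have := hanti (Set.left_mem_Icc.2 hab) ht ht.1
    simp only [K, P, intervalIntegral.integral_same, neg_zero, Real.exp_zero, mul_one,
      sub_zero] at this
    linarith
  rwa [Real.exp_neg, ← div_eq_mul_inv, div_le_iff₀ (Real.exp_pos _)] at hKP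

end Gronwall

section TimeDependentL2

variable {α : Type*} [MeasurableSpace α] {μ : Measure α} {S : Set ℝ} {f g : ℝ → α → ℝ} {t : ℝ}

/-- The slices `f t`, `t ∈ S`, of a time-dependent function have a common majorant in `L²(μ)`:
the hypothesis of the dominated convergence theorem for `t ↦ ∫ (f t)² ∂μ`. -/
def L2DominatedOn (μ : Measure α) (S : Set ℝ) (f : ℝ → α → ℝ) : Prop :=
  ∃ g : α → ℝ, MemLp g 2 μ ∧ ∀ t ∈ S, ∀ x, |f t x| ≤ g x

lemma L2DominatedOn.memLp (hf : L2DominatedOn μ S f) (ht : t ∈ S)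
    (hm : AEStronglyMeasurable (f t) μ) : MemLp (f t) 2 μ := by
  obtain ⟨m, hm2, hle⟩ := hf
  exact hm2.mono' hm (.of_forall (hle t ht))

lemma L2DominatedOn.sub (hf : L2DominatedOn μ S f) (hg : L2DominatedOn μ S g) :
    L2DominatedOn μ S (f - g) := by
  obtain ⟨m, hm, hfm⟩ := hf
  obtain ⟨n, hn, hgn⟩ := hg
  exact ⟨m + n, hm.add hn, fun t ht x =>
    (abs_sub _ _).trans (add_le_add (hfm t ht x) (hgn t ht x))⟩

lemma continuousOn_integral_sq (hm : ∀ t ∈ S, AEStronglyMeasurable (f t) μ)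
    (hc : ∀ x, ContinuousOn (fun t => f t x) S) (hf : L2DominatedOn μ S f) :
    ContinuousOn (fun t => ∫ x, f t x ^ 2 ∂μ) S := by
  obtain ⟨m, hm2, hle⟩ := hf
  refine continuousOn_of_dominated (bound := fun x => m x ^ 2) (fun t ht => (hm t ht).pow 2)
    (fun t ht => .of_forall fun x => ?_) hm2.integrable_sq (.of_forall fun x => (hc x).pow 2)
  rw [norm_pow, Real.norm_eq_abs]
  gcongr
  exact hle t ht x

lemma hasDerivAt_integral_sq {f' : ℝ → α → ℝ} (hS : S ∈ nhds t)
    (hm : ∀ s ∈ S, AEStronglyMeasurable (f s) μ) (hm' : AEStronglyMeasurable (f' t) μ)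
    (hd : ∀ s ∈ S, ∀ x, HasDerivAt (fun r => f r x) (f' s x) s)
    (hf : L2DominatedOn μ S f) (hf' : L2DominatedOn μ S f') :
    HasDerivAt (fun s => ∫ x, f s x ^ 2 ∂μ) (∫ x, 2 * (f t x * f' t x) ∂μ) t := by
  have htS := mem_of_mem_nhds hS
  have hft := (hf.memLp htS (hm t htS)).integrable_sq
  obtain ⟨m, hm2, hle⟩ := hf
  obtain ⟨n, hn2, hle'⟩ := hf'
  refine (hasDerivAt_integral_of_dominated_loc_of_deriv_le hS
    (F' := fun s x => 2 * (f s x * f' s x)) (bound := fun x => 2 * (m x * n x))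
    (Filter.mem_of_superset hS fun s hs => (hm s hs).pow 2) hft
    (((hm t htS).mul hm').const_mul 2) (.of_forall fun x s hs => ?_)
    ((hm2.integrable_mul hn2).const_mul 2) (.of_forall fun x s hs => ?_)).2
  · rw [norm_mul, norm_mul, Real.norm_two, Real.norm_eq_abs, Real.norm_eq_abs]
    gcongr
    · exact (abs_nonneg _).trans (hle s hs x)
    · exact hle s hs x
    · exact hle' s hs x
  · exact ((hd s hs x).fun_pow 2).congr_deriv (by ring)

end TimeDependentL2

section PartialDerivatives

variable {f g : ℝ × ℝ → ℝ}

lemma hasDerivAt_pdx (hf : Differentiable ℝ f) (x y : ℝ) :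
    HasDerivAt (fun x => f (x, y)) (pdx f (x, y)) x :=
  (hf (x, y)).hasFDerivAt.comp_hasDerivAt x ((hasDerivAt_id x).prodMk (hasDerivAt_const x y))

lemma hasDerivAt_pdy (hf : Differentiable ℝ f) (x y : ℝ) :
    HasDerivAt (fun y => f (x, y)) (pdy f (x, y)) y :=
  (hf (x, y)).hasFDerivAt.comp_hasDerivAt y ((hasDerivAt_const y x).prodMk (hasDerivAt_id y))

lemma pdx_sub (hf : Differentiable ℝ f) (hg : Differentiable ℝ g) :
    pdx (f - g) = pdx f - pdx g :=
  funext fun q => by simp [pdx, fderiv_sub (hf q) (hg q)]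

lemma pdy_sub (hf : Differentiable ℝ f) (hg : Differentiable ℝ g) :
    pdy (f - g) = pdy f - pdy g :=
  funext fun q => by simp [pdy, fderiv_sub (hf q) (hg q)]

lemma pdx_mul (hf : Differentiable ℝ f) (hg : Differentiable ℝ g) :
    pdx (f * g) = f * pdx g + g * pdx f :=
  funext fun q => by simp [pdx, fderiv_mul (hf q) (hg q)]

lemma pdy_mul (hf : Differentiable ℝ f) (hg : Differentiable ℝ g) :
    pdy (f * g) = f * pdy g + g * pdy f :=
  funext fun q => by simp [pdy, fderiv_mul (hf q) (hg q)]

end PartialDerivatives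

open scoped ENNReal

section HalfPlane

lemma halfPlane_eq_prod :
    halfPlane = (volume : Measure ℝ).prod (volume.restrict (Set.Ioi 0)) := by
  have hset : {q : ℝ × ℝ | 0 < q.2} = Set.univ ×ˢ Set.Ioi 0 := Set.univ_prod.symm
  rw [halfPlane, hset, Measure.volume_eq_prod, ← Measure.prod_restrict, Measure.restrict_univ]

lemma ae_halfPlane_snd_pos : ∀ᵐ q ∂halfPlane, 0 < q.2 :=
  ae_restrict_mem (measurableSet_lt measurable_const measurable_snd)

/-- The Sobolev class `W^{1,p}` of the half-plane, for functions that are differentiable on all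
of `ℝ × ℝ`, so that derivatives are classical and traces at `y = 0` are values. -/
structure MemW1 (p : ℝ≥0∞) (f : ℝ × ℝ → ℝ) : Prop where
  differentiable : Differentiable ℝ f
  memLp : MemLp f p halfPlane
  memLp_pdx : MemLp (pdx f) p halfPlane
  memLp_pdy : MemLp (pdy f) p halfPlane

/-- The class `W^{2,p}` of the half-plane, with the conventions of `MemW1`. -/
structure MemW2 (p : ℝ≥0∞) (f : ℝ × ℝ → ℝ) : Prop extends MemW1 p f where
  memW1_pdx : MemW1 p (pdx f)
  memW1_pdy : MemW1 p (pdy f)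

variable {p q r : ℝ≥0∞} {f g : ℝ × ℝ → ℝ}

lemma MemW1.sub (hf : MemW1 p f) (hg : MemW1 p g) : MemW1 p (f - g) where
  differentiable := hf.differentiable.sub hg.differentiable
  memLp := hf.memLp.sub hg.memLp
  memLp_pdx := pdx_sub hf.differentiable hg.differentiable ▸ hf.memLp_pdx.sub hg.memLp_pdx
  memLp_pdy := pdy_sub hf.differentiable hg.differentiable ▸ hf.memLp_pdy.sub hg.memLp_pdy

lemma MemW1.mul [ENNReal.HolderTriple p q r] (hf : MemW1 p f) (hg : MemW1 q g) :
    MemW1 r (f * g) where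
  differentiable := hf.differentiable.mul hg.differentiable
  memLp := hg.memLp.mul hf.memLp
  memLp_pdx := by
    rw [pdx_mul hf.differentiable hg.differentiable, mul_comm g]
    exact (hg.memLp_pdx.mul hf.memLp).add (hg.memLp.mul hf.memLp_pdx)
  memLp_pdy := by
    rw [pdy_mul hf.differentiable hg.differentiable, mul_comm g]
    exact (hg.memLp_pdy.mul hf.memLp).add (hg.memLp.mul hf.memLp_pdy)

lemma MemW2.sub (hf : MemW2 p f) (hg : MemW2 p g) : MemW2 p (f - g) where
  toMemW1 := hf.toMemW1.sub hg.toMemW1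
  memW1_pdx := pdx_sub hf.differentiable hg.differentiable ▸ hf.memW1_pdx.sub hg.memW1_pdx
  memW1_pdy := pdy_sub hf.differentiable hg.differentiable ▸ hf.memW1_pdy.sub hg.memW1_pdy

lemma MemW2.memLp_lap (hf : MemW2 p f) : MemLp (lap f) p halfPlane :=
  hf.memW1_pdx.memLp_pdx.add hf.memW1_pdy.memLp_pdy

lemma MemW2.lap_sub (hf : MemW2 p f) (hg : MemW2 p g) : lap (f - g) = lap f - lap g := by
  funext q
  simp only [lap, pdx_sub hf.differentiable hg.differentiable,
    pdy_sub hf.differentiable hg.differentiable, Pi.sub_apply,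
    pdx_sub hf.memW1_pdx.differentiable hg.memW1_pdx.differentiable,
    pdy_sub hf.memW1_pdy.differentiable hg.memW1_pdy.differentiable]
  ring

lemma MemW1.integral_pdx (hf : MemW1 1 f) : ∫ q, pdx f q ∂halfPlane = 0 := by
  have hint := memLp_one_iff_integrable.1 hf.memLp
  have hint_pdx := memLp_one_iff_integrable.1 hf.memLp_pdx
  rw [halfPlane_eq_prod] at hint hint_pdx ⊢
  rw [integral_prod_symm _ hint_pdx]
  refine integral_eq_zero_of_ae ?_
  filter_upwards [hint.prod_left_ae, hint_pdx.prod_left_ae] with y hy hy_pdx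
  exact integral_eq_zero_of_hasDerivAt_of_integrable
    (fun x => hasDerivAt_pdx hf.differentiable x y) hy_pdx hy

lemma MemW1.integral_pdy (hf : MemW1 1 f) : ∫ q, pdy f q ∂halfPlane = -∫ x, f (x, 0) := by
  have hint := memLp_one_iff_integrable.1 hf.memLp
  have hint_pdy := memLp_one_iff_integrable.1 hf.memLp_pdy
  rw [halfPlane_eq_prod] at hint hint_pdy ⊢
  rw [integral_prod _ hint_pdy, ← integral_neg]
  refine integral_congr_ae ?_
  filter_upwards [hint.prod_right_ae, hint_pdy.prod_right_ae] with x hx hx_pdy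
  have hderiv : ∀ y ∈ Set.Ici (0 : ℝ), HasDerivAt (fun y => f (x, y)) (pdy f (x, y)) y :=
    fun y _ => hasDerivAt_pdy hf.differentiable x y
  have htendsto := tendsto_zero_of_hasDerivAt_of_integrableOn_Ioi
    (fun y hy => hderiv y (Set.Ioi_subset_Ici_self hy)) hx_pdy hx
  rw [integral_Ioi_of_hasDerivAt_of_tendsto' hderiv hx_pdy htendsto, zero_sub]

end HalfPlane

section Advection

variable {p q : ℝ≥0∞} {u w f Q : ℝ × ℝ → ℝ}

/-- The derivative `(u ∂ₓ + w ∂ᵧ) f` of `f` along the planar field `(u, w)`. -/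
noncomputable def advect (u w f : ℝ × ℝ → ℝ) (q : ℝ × ℝ) : ℝ := u q * pdx f q + w q * pdy f q

lemma MemW1.memLp_advect {r : ℝ≥0∞} [ENNReal.HolderTriple p q r] (hu : MemLp u p halfPlane)
    (hw : MemLp w p halfPlane) (hf : MemW1 q f) : MemLp (advect u w f) r halfPlane :=
  (hf.memLp_pdx.mul hu).add (hf.memLp_pdy.mul hw)

lemma integral_advect_eq_neg [ENNReal.HolderConjugate p q] (hu : MemW1 p u) (hw : MemW1 p w)
    (hQ : MemW1 q Q) :
    ∫ z, advect u w Q z ∂halfPlane =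
      -(∫ z, (pdx u z + pdy w z) * Q z ∂halfPlane) - ∫ x, w (x, 0) * Q (x, 0) := by
  have huQ : MemW1 1 (u * Q) := hu.mul hQ
  have hwQ : MemW1 1 (w * Q) := hw.mul hQ
  have hint_advect : Integrable (advect u w Q) halfPlane :=
    memLp_one_iff_integrable.1 (hQ.memLp_advect hu.memLp hw.memLp)
  have hint_div : Integrable (fun z => (pdx u z + pdy w z) * Q z) halfPlane :=
    (hu.memLp_pdx.add hw.memLp_pdy).integrable_mul hQ.memLp
  have hproduct_rule : ∀ z, pdx (u * Q) z + pdy (w * Q) z =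
      advect u w Q z + (pdx u z + pdy w z) * Q z := fun z => by
    rw [pdx_mul hu.differentiable hQ.differentiable, pdy_mul hw.differentiable hQ.differentiable]
    simp only [advect, Pi.add_apply, Pi.mul_apply]
    ring
  have hdivergence := integral_add (memLp_one_iff_integrable.1 huQ.memLp_pdx)
    (memLp_one_iff_integrable.1 hwQ.memLp_pdy)
  simp only [hproduct_rule, integral_add hint_advect hint_div, huQ.integral_pdx,
    hwQ.integral_pdy, Pi.mul_apply] at hdivergence
  linarith

/-- Planar fields `(u, w)` that are divergence free in the open half-plane and tangent to its
boundary. -/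
structure IsSolenoidal (u w : ℝ × ℝ → ℝ) : Prop where
  div_eq_zero : ∀ z : ℝ × ℝ, 0 < z.2 → pdx u z + pdy w z = 0
  normal_trace : ∀ x, w (x, 0) = 0

lemma IsSolenoidal.sub {u' w' : ℝ × ℝ → ℝ} (h : IsSolenoidal u w) (h' : IsSolenoidal u' w')
    (hu : Differentiable ℝ u) (hw : Differentiable ℝ w) (hu' : Differentiable ℝ u')
    (hw' : Differentiable ℝ w') : IsSolenoidal (u - u') (w - w') where
  div_eq_zero z hz := by
    simp only [pdx_sub hu hu', pdy_sub hw hw', Pi.sub_apply]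
    linear_combination h.div_eq_zero z hz - h'.div_eq_zero z hz
  normal_trace x := by simp [h.normal_trace, h'.normal_trace]

lemma integral_advect_eq_zero [ENNReal.HolderConjugate p q] (hu : MemW1 p u) (hw : MemW1 p w)
    (hQ : MemW1 q Q) (hsol : IsSolenoidal u w) : ∫ z, advect u w Q z ∂halfPlane = 0 := by
  have hdiv_ae : ∫ z, (pdx u z + pdy w z) * Q z ∂halfPlane = 0 := by
    refine integral_eq_zero_of_ae ?_
    filter_upwards [ae_halfPlane_snd_pos] with z hz
    simp [hsol.div_eq_zero z hz]
  simp [integral_advect_eq_neg hu hw hQ, hdiv_ae, hsol.normal_trace]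

lemma integral_mul_advect_self_eq_zero (hu : MemW1 ∞ u) (hw : MemW1 ∞ w) (hf : MemW1 2 f)
    (hsol : IsSolenoidal u w) :
    ∫ z, f z * advect u w f z ∂halfPlane = 0 := by
  have hsq : MemW1 1 (f * f) := hf.mul hf
  have hadvect_sq : advect u w (f * f) = fun z => 2 * (f z * advect u w f z) := by
    funext z
    simp only [advect, pdx_mul hf.differentiable hf.differentiable,
      pdy_mul hf.differentiable hf.differentiable, Pi.add_apply, Pi.mul_apply]
    ring
  have h := integral_advect_eq_zero hu hw hsq hsol
  rw [hadvect_sq, integral_const_mul] at h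
  linarith

lemma integral_mul_lap_nonpos (hf : MemW2 2 f) (hf0 : ∀ x, f (x, 0) * pdy f (x, 0) = 0) :
    ∫ z, f z * lap f z ∂halfPlane ≤ 0 := by
  have hgreen := integral_advect_eq_neg hf.memW1_pdx hf.memW1_pdy hf.toMemW1
  simp only [mul_comm (pdy f (_, 0)), hf0, integral_zero, sub_zero] at hgreen
  have hgrad : 0 ≤ ∫ z, advect (pdx f) (pdy f) f z ∂halfPlane :=
    integral_nonneg fun z => add_nonneg (mul_self_nonneg _) (mul_self_nonneg _)
  simp only [lap, mul_comm (f _)]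
  linarith

/-- The part `ν Δf − δ (u ∂ₓ + w ∂ᵧ) f` of the evolution of a component `f` of the flow. -/
noncomputable def advectionDiffusion (δ ν : ℝ) (u w f : ℝ × ℝ → ℝ) (q : ℝ × ℝ) : ℝ :=
  ν * lap f q - δ * advect u w f q

lemma advectionDiffusion_sub_advectionDiffusion {u' w' f' : ℝ × ℝ → ℝ} (δ ν : ℝ) (hf : MemW2 p f)
    (hf' : MemW2 p f') (z : ℝ × ℝ) :
    advectionDiffusion δ ν u' w' f' z - advectionDiffusion δ ν u w f z =
      advectionDiffusion δ ν u w (f' - f) z - δ * advect (u' - u) (w' - w) f' z := by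
  simp only [advectionDiffusion, advect, hf'.lap_sub hf,
    pdx_sub hf'.differentiable hf.differentiable, pdy_sub hf'.differentiable hf.differentiable,
    Pi.sub_apply]
  ring

lemma integrable_mul_advectionDiffusion (δ ν : ℝ) (hu : MemLp u ∞ halfPlane)
    (hw : MemLp w ∞ halfPlane) (hf : MemW2 2 f) :
    Integrable (fun z => f z * advectionDiffusion δ ν u w f z) halfPlane :=
  hf.memLp.integrable_mul ((hf.memLp_lap.const_mul ν).sub
    ((hf.toMemW1.memLp_advect (r := 2) hu hw).const_mul δ))

lemma integral_mul_advectionDiffusion_nonpos {ν : ℝ} (hν : 0 ≤ ν) (δ : ℝ)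
    (hu : MemW1 ∞ u) (hw : MemW1 ∞ w) (hsol : IsSolenoidal u w) (hf : MemW2 2 f)
    (hf0 : ∀ x, f (x, 0) * pdy f (x, 0) = 0) :
    ∫ z, f z * advectionDiffusion δ ν u w f z ∂halfPlane ≤ 0 := by
  have hint_lap : Integrable (fun z => f z * lap f z) halfPlane :=
    hf.memLp.integrable_mul hf.memLp_lap
  have hint_advect : Integrable (fun z => f z * advect u w f z) halfPlane :=
    hf.memLp.integrable_mul (hf.toMemW1.memLp_advect (r := 2) hu.memLp hw.memLp)
  calc ∫ z, f z * advectionDiffusion δ ν u w f z ∂halfPlane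
      = ν * ∫ z, f z * lap f z ∂halfPlane - δ * ∫ z, f z * advect u w f z ∂halfPlane := by
        rw [← integral_const_mul, ← integral_const_mul,
          ← integral_sub (hint_lap.const_mul ν) (hint_advect.const_mul δ)]
        exact integral_congr_ae (.of_forall fun z => by simp only [advectionDiffusion]; ring)
    _ ≤ 0 := by
        rw [integral_mul_advect_self_eq_zero hu hw hf.toMemW1 hsol, mul_zero, sub_zero]
        exact mul_nonpos_of_nonneg_of_nonpos hν (integral_mul_lap_nonpos hf hf0)

end Advection

section Energy

lemma integral_add_add {α : Type*} [MeasurableSpace α] {μ : Measure α} {f g h : α → ℝ}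
    (hf : Integrable f μ) (hg : Integrable g μ) (hh : Integrable h μ) :
    ∫ x, (f x + g x + h x) ∂μ = ∫ x, f x ∂μ + ∫ x, g x ∂μ + ∫ x, h x ∂μ := by
  rw [← integral_add hf hg]
  exact integral_add (hf.add hg) hh

variable {f g h f' g' h' : ℝ × ℝ → ℝ}

/-- The squared `L²` norm of the triple `(f, g, h)` on the half-plane. -/
noncomputable def energy (f g h : ℝ × ℝ → ℝ) : ℝ :=
  ∫ q, (f q ^ 2 + g q ^ 2 + h q ^ 2) ∂halfPlane

lemma energy_nonneg (f g h : ℝ × ℝ → ℝ) : 0 ≤ energy f g h :=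
  integral_nonneg fun _ => by positivity

lemma integrable_sq_add_sq_add_sq (hf : MemLp f 2 halfPlane) (hg : MemLp g 2 halfPlane)
    (hh : MemLp h 2 halfPlane) : Integrable (fun q => f q ^ 2 + g q ^ 2 + h q ^ 2) halfPlane :=
  (hf.integrable_sq.add hg.integrable_sq).add hh.integrable_sq

lemma energy_eq_add (hf : MemLp f 2 halfPlane) (hg : MemLp g 2 halfPlane)
    (hh : MemLp h 2 halfPlane) : energy f g h =
      ∫ q, f q ^ 2 ∂halfPlane + ∫ q, g q ^ 2 ∂halfPlane + ∫ q, h q ^ 2 ∂halfPlane :=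
  integral_add_add hf.integrable_sq hg.integrable_sq hh.integrable_sq

/-- The Frobenius norm of the gradient of the triple `(f, g, h)`. -/
noncomputable def gradNorm (f g h : ℝ × ℝ → ℝ) (q : ℝ × ℝ) : ℝ :=
  √(pdx f q ^ 2 + pdy f q ^ 2 + pdx g q ^ 2 + pdy g q ^ 2 + pdx h q ^ 2 + pdy h q ^ 2)

lemma neg_mul_advect_le_gradNorm_mul (q : ℝ × ℝ) :
    -(f q * advect f g f' q + g q * advect f g g' q + h q * advect f g h' q) ≤
      gradNorm f' g' h' q * (f q ^ 2 + g q ^ 2 + h q ^ 2) := by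
  have hcauchy_schwarz := Finset.sum_mul_sq_le_sq_mul_sq Finset.univ
    ![f q * f q, f q * g q, g q * f q, g q * g q, h q * f q, h q * g q]
    ![pdx f' q, pdy f' q, pdx g' q, pdy g' q, pdx h' q, pdy h' q]
  simp only [Fin.sum_univ_six, Fin.isValue, Matrix.cons_val] at hcauchy_schwarz
  have htensor_norm : (f q * f q) ^ 2 + (f q * g q) ^ 2 + (g q * f q) ^ 2 + (g q * g q) ^ 2 +
      (h q * f q) ^ 2 + (h q * g q) ^ 2 ≤ (f q ^ 2 + g q ^ 2 + h q ^ 2) ^ 2 := by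
    nlinarith [sq_nonneg (f q * h q), sq_nonneg (g q * h q), sq_nonneg (h q * h q)]
  have hsq : (f q * advect f g f' q + g q * advect f g g' q + h q * advect f g h' q) ^ 2 ≤
      ((f q ^ 2 + g q ^ 2 + h q ^ 2) * gradNorm f' g' h' q) ^ 2 := by
    rw [mul_pow, gradNorm, Real.sq_sqrt (by positivity)]
    refine Eq.trans_le ?_ (hcauchy_schwarz.trans
      (mul_le_mul_of_nonneg_right htensor_norm (by positivity)))
    simp only [advect]
    ring
  rw [mul_comm (gradNorm f' g' h' q)]
  exact (neg_le_abs _).trans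
    (abs_le_of_sq_le_sq hsq (mul_nonneg (by positivity) (Real.sqrt_nonneg _)))

end Energy

section TimeRegularity

variable {S : Set ℝ} {T t : ℝ} {f g h : ℝ → ℝ × ℝ → ℝ}

/-- Continuous space-time functions whose slices at times in `S` have a common majorant in
`L²` of the half-plane. -/
structure IsL2Family (S : Set ℝ) (f : ℝ → ℝ × ℝ → ℝ) : Prop where
  continuous : Continuous (uncurry f)
  dominated : L2DominatedOn halfPlane S f

lemma IsL2Family.mono {S' : Set ℝ} (hf : IsL2Family S f) (hS : S' ⊆ S) : IsL2Family S' f :=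
  ⟨hf.continuous, hf.dominated.imp fun _ hg => ⟨hg.1, fun t ht => hg.2 t (hS ht)⟩⟩

lemma IsL2Family.aestronglyMeasurable (hf : IsL2Family S f) (t : ℝ) :
    AEStronglyMeasurable (f t) halfPlane :=
  (hf.continuous.comp (Continuous.prodMk_right t)).aestronglyMeasurable

lemma IsL2Family.memLp (hf : IsL2Family S f) (ht : t ∈ S) : MemLp (f t) 2 halfPlane :=
  hf.dominated.memLp ht (hf.aestronglyMeasurable t)

lemma IsL2Family.continuousOn_integral_sq (hf : IsL2Family S f) :
    ContinuousOn (fun t => ∫ q, f t q ^ 2 ∂halfPlane) S :=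
  _root_.continuousOn_integral_sq (fun t _ => hf.aestronglyMeasurable t)
    (fun q => (hf.continuous.comp (Continuous.prodMk_left q)).continuousOn) hf.dominated

lemma continuousOn_energy (hf : IsL2Family S f) (hg : IsL2Family S g) (hh : IsL2Family S h) :
    ContinuousOn (fun t => energy (f t) (g t) (h t)) S :=
  ((hf.continuousOn_integral_sq.add hg.continuousOn_integral_sq).add
    hh.continuousOn_integral_sq).congr
      fun _ ht => energy_eq_add (hf.memLp ht) (hg.memLp ht) (hh.memLp ht)

/-- The regularity on `[0, T]` under which the energy method applies to `f`: the square integral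
is differentiable in time, and Green's formula holds at every interior time. -/
structure EnergyRegular (T : ℝ) (f : ℝ → ℝ × ℝ → ℝ) : Prop extends
    IsL2Family (Set.Icc 0 T) f where
  differentiableAt : ∀ t ∈ Set.Ioo 0 T, ∀ q, DifferentiableAt ℝ (fun s => f s q) t
  dominated_deriv : L2DominatedOn halfPlane (Set.Ioo 0 T) fun t q => deriv (fun s => f s q) t
  memW2 : ∀ t ∈ Set.Ioo 0 T, MemW2 2 (f t)

namespace EnergyRegular

lemma deriv_sub (hf : EnergyRegular T f) (hg : EnergyRegular T g) (ht : t ∈ Set.Ioo 0 T)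
    (q : ℝ × ℝ) : deriv (fun s => (f - g) s q) t =
      deriv (fun s => f s q) t - deriv (fun s => g s q) t :=
  deriv_fun_sub (hf.differentiableAt t ht q) (hg.differentiableAt t ht q)

lemma sub (hf : EnergyRegular T f) (hg : EnergyRegular T g) : EnergyRegular T (f - g) where
  continuous := hf.continuous.sub hg.continuous
  dominated := hf.dominated.sub hg.dominated
  differentiableAt t ht q := (hf.differentiableAt t ht q).sub (hg.differentiableAt t ht q)
  dominated_deriv := (hf.dominated_deriv.sub hg.dominated_deriv).imp fun _ hm =>
    ⟨hm.1, fun t ht q => (congrArg abs (hf.deriv_sub hg ht q)).trans_le (hm.2 t ht q)⟩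
  memW2 t ht := (hf.memW2 t ht).sub (hg.memW2 t ht)

lemma memLp_deriv (hf : EnergyRegular T f) (ht : t ∈ Set.Ioo 0 T) :
    MemLp (fun q => deriv (fun s => f s q) t) 2 halfPlane := by
  have hswap : Continuous (uncurry fun q s => f s q) := hf.continuous.comp continuous_swap
  exact hf.dominated_deriv.memLp ht ((stronglyMeasurable_deriv_with_param hswap).comp_measurable
    (measurable_id.prodMk measurable_const)).aestronglyMeasurable

lemma hasDerivAt_integral_sq (hf : EnergyRegular T f) (ht : t ∈ Set.Ioo 0 T) :
    HasDerivAt (fun s => ∫ q, f s q ^ 2 ∂halfPlane)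
      (∫ q, 2 * (f t q * deriv (fun s => f s q) t) ∂halfPlane) t :=
  _root_.hasDerivAt_integral_sq (f' := fun t q => deriv (fun s => f s q) t)
    (Ioo_mem_nhds ht.1 ht.2) (fun s _ => hf.aestronglyMeasurable s)
    (hf.memLp_deriv ht).aestronglyMeasurable
    (fun s hs q => (hf.differentiableAt s hs q).hasDerivAt)
    (hf.mono Set.Ioo_subset_Icc_self).dominated hf.dominated_deriv

lemma integrable_mul_deriv (hf : EnergyRegular T f) (ht : t ∈ Set.Ioo 0 T) :
    Integrable (fun q => 2 * (f t q * deriv (fun s => f s q) t)) halfPlane :=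
  ((hf.memLp (Set.Ioo_subset_Icc_self ht)).integrable_mul (hf.memLp_deriv ht)).const_mul 2

end EnergyRegular

lemma hasDerivAt_energy (hf : EnergyRegular T f) (hg : EnergyRegular T g)
    (hh : EnergyRegular T h) (ht : t ∈ Set.Ioo 0 T) :
    HasDerivAt (fun s => energy (f s) (g s) (h s))
      (∫ q, (2 * (f t q * deriv (fun s => f s q) t) + 2 * (g t q * deriv (fun s => g s q) t) +
        2 * (h t q * deriv (fun s => h s q) t)) ∂halfPlane) t := by
  rw [integral_add_add (hf.integrable_mul_deriv ht) (hg.integrable_mul_deriv ht)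
    (hh.integrable_mul_deriv ht)]
  refine (((hf.hasDerivAt_integral_sq ht).add (hg.hasDerivAt_integral_sq ht)).add
    (hh.hasDerivAt_integral_sq ht)).congr_of_eventuallyEq ?_
  filter_upwards [Icc_mem_nhds ht.1 ht.2] with s hs
  exact energy_eq_add (hf.memLp hs) (hg.memLp hs) (hh.memLp hs)

end TimeRegularity

section Boussinesq

variable {α β δ ν κ T t : ℝ} {u w b p ua wa ba pa f g h P Ru Rw Rb : ℝ → ℝ × ℝ → ℝ}

/-- `(u, w, b)` with pressure `p` solves the Boussinesq system with remainder `(Ru, Rw, Rb)` on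
`(0, T)`, in the regularity of the energy method. The buoyancy coupling is written with arbitrary
coefficients `α` and `β`, which are `sin γ` and `cos γ` for a slope of angle `γ`. -/
structure IsBoussinesqFlow (α β δ ν κ T : ℝ) (u w b p Ru Rw Rb : ℝ → ℝ × ℝ → ℝ) : Prop where
  regular_u : EnergyRegular T u
  regular_w : EnergyRegular T w
  regular_b : EnergyRegular T b
  memW1_pressure : ∀ t ∈ Set.Ioo 0 T, MemW1 2 (p t)
  equation_u : ∀ t ∈ Set.Ioo 0 T, ∀ q : ℝ × ℝ, 0 < q.2 → deriv (fun s => u s q) t =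
    advectionDiffusion δ ν (u t) (w t) (u t) q + α * b t q - pdx (p t) q + Ru t q
  equation_w : ∀ t ∈ Set.Ioo 0 T, ∀ q : ℝ × ℝ, 0 < q.2 → deriv (fun s => w s q) t =
    advectionDiffusion δ ν (u t) (w t) (w t) q + β * b t q - pdy (p t) q + Rw t q
  equation_b : ∀ t ∈ Set.Ioo 0 T, ∀ q : ℝ × ℝ, 0 < q.2 → deriv (fun s => b s q) t =
    advectionDiffusion δ κ (u t) (w t) (b t) q - α * u t q - β * w t q + Rb t q
  solenoidal : ∀ t ∈ Set.Ioo 0 T, IsSolenoidal (u t) (w t)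
  boundary_u : ∀ t ∈ Set.Ioo 0 T, ∀ x, u t (x, 0) = 0
  boundary_b : ∀ t ∈ Set.Ioo 0 T, ∀ x, pdy (b t) (x, 0) = 0

/-- `(f, g, h)` with pressure `P` solves the equations satisfied by the difference of the flow
`(ua, wa, ba)` with remainder `(Ru, Rw, Rb)` and an exact flow with velocity `(u, w)`. -/
structure IsBoussinesqPerturbation (α β δ ν κ T : ℝ)
    (u w ua wa ba f g h P Ru Rw Rb : ℝ → ℝ × ℝ → ℝ) : Prop where
  regular_f : EnergyRegular T f
  regular_g : EnergyRegular T g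
  regular_h : EnergyRegular T h
  memW1_pressure : ∀ t ∈ Set.Ioo 0 T, MemW1 2 (P t)
  equation_f : ∀ t ∈ Set.Ioo 0 T, ∀ q : ℝ × ℝ, 0 < q.2 → deriv (fun s => f s q) t =
    advectionDiffusion δ ν (u t) (w t) (f t) q - δ * advect (f t) (g t) (ua t) q
      + α * h t q - pdx (P t) q + Ru t q
  equation_g : ∀ t ∈ Set.Ioo 0 T, ∀ q : ℝ × ℝ, 0 < q.2 → deriv (fun s => g s q) t =
    advectionDiffusion δ ν (u t) (w t) (g t) q - δ * advect (f t) (g t) (wa t) q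
      + β * h t q - pdy (P t) q + Rw t q
  equation_h : ∀ t ∈ Set.Ioo 0 T, ∀ q : ℝ × ℝ, 0 < q.2 → deriv (fun s => h s q) t =
    advectionDiffusion δ κ (u t) (w t) (h t) q - δ * advect (f t) (g t) (ba t) q
      - α * f t q - β * g t q + Rb t q
  solenoidal : ∀ t ∈ Set.Ioo 0 T, IsSolenoidal (f t) (g t)
  boundary_f : ∀ t ∈ Set.Ioo 0 T, ∀ x, f t (x, 0) = 0
  boundary_h : ∀ t ∈ Set.Ioo 0 T, ∀ x, pdy (h t) (x, 0) = 0

lemma IsBoussinesqFlow.sub (hWa : IsBoussinesqFlow α β δ ν κ T ua wa ba pa Ru Rw Rb)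
    (hW : IsBoussinesqFlow α β δ ν κ T u w b p 0 0 0) :
    IsBoussinesqPerturbation α β δ ν κ T u w ua wa ba (ua - u) (wa - w) (ba - b) (pa - p)
      Ru Rw Rb where
  regular_f := hWa.regular_u.sub hW.regular_u
  regular_g := hWa.regular_w.sub hW.regular_w
  regular_h := hWa.regular_b.sub hW.regular_b
  memW1_pressure t ht := (hWa.memW1_pressure t ht).sub (hW.memW1_pressure t ht)
  equation_f t ht q hq := by
    rw [hWa.regular_u.deriv_sub hW.regular_u ht, hWa.equation_u t ht q hq,
      hW.equation_u t ht q hq]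
    simp only [Pi.sub_apply, Pi.zero_apply,
      pdx_sub (hWa.memW1_pressure t ht).differentiable (hW.memW1_pressure t ht).differentiable]
    linear_combination advectionDiffusion_sub_advectionDiffusion δ ν
      (hW.regular_u.memW2 t ht) (hWa.regular_u.memW2 t ht) q
  equation_g t ht q hq := by
    rw [hWa.regular_w.deriv_sub hW.regular_w ht, hWa.equation_w t ht q hq,
      hW.equation_w t ht q hq]
    simp only [Pi.sub_apply, Pi.zero_apply,
      pdy_sub (hWa.memW1_pressure t ht).differentiable (hW.memW1_pressure t ht).differentiable]
    linear_combination advectionDiffusion_sub_advectionDiffusion δ ν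
      (hW.regular_w.memW2 t ht) (hWa.regular_w.memW2 t ht) q
  equation_h t ht q hq := by
    rw [hWa.regular_b.deriv_sub hW.regular_b ht, hWa.equation_b t ht q hq,
      hW.equation_b t ht q hq]
    simp only [Pi.sub_apply, Pi.zero_apply]
    linear_combination advectionDiffusion_sub_advectionDiffusion δ κ
      (hW.regular_b.memW2 t ht) (hWa.regular_b.memW2 t ht) q
  solenoidal t ht := (hWa.solenoidal t ht).sub (hW.solenoidal t ht)
    (hWa.regular_u.memW2 t ht).differentiable (hWa.regular_w.memW2 t ht).differentiable
    (hW.regular_u.memW2 t ht).differentiable (hW.regular_w.memW2 t ht).differentiable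
  boundary_f t ht x := by simp [hWa.boundary_u t ht, hW.boundary_u t ht]
  boundary_h t ht x := by
    simp [pdy_sub (hWa.regular_b.memW2 t ht).differentiable
      (hW.regular_b.memW2 t ht).differentiable, hWa.boundary_b t ht, hW.boundary_b t ht]

/-- The power density of transport, diffusion and pressure in the energy balance of the
perturbation `(f, g, h)` with pressure `P`: the terms whose integral has a sign. -/
noncomputable def dissipativePower (δ ν κ : ℝ) (u w f g h P : ℝ × ℝ → ℝ) (q : ℝ × ℝ) : ℝ :=
  f q * advectionDiffusion δ ν u w f q + g q * advectionDiffusion δ ν u w g q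
    + h q * advectionDiffusion δ κ u w h q - advect f g P q

namespace IsBoussinesqPerturbation

lemma sum_mul_deriv_eq (hE : IsBoussinesqPerturbation α β δ ν κ T u w ua wa ba f g h P Ru Rw Rb)
    (ht : t ∈ Set.Ioo 0 T) {q : ℝ × ℝ} (hq : 0 < q.2) :
    f t q * deriv (fun s => f s q) t + g t q * deriv (fun s => g s q) t
      + h t q * deriv (fun s => h s q) t =
    dissipativePower δ ν κ (u t) (w t) (f t) (g t) (h t) (P t) q
      - δ * (f t q * advect (f t) (g t) (ua t) q + g t q * advect (f t) (g t) (wa t) q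
        + h t q * advect (f t) (g t) (ba t) q)
      + (f t q * Ru t q + g t q * Rw t q + h t q * Rb t q) := by
  rw [hE.equation_f t ht q hq, hE.equation_g t ht q hq, hE.equation_h t ht q hq]
  simp only [dissipativePower, advect]
  ring

lemma two_mul_sum_mul_deriv_le
    (hE : IsBoussinesqPerturbation α β δ ν κ T u w ua wa ba f g h P Ru Rw Rb) (hδ : 0 ≤ δ)
    (ht : t ∈ Set.Ioo 0 T) {q : ℝ × ℝ} (hq : 0 < q.2) {m : ℝ}
    (hm : gradNorm (ua t) (wa t) (ba t) q ≤ m) :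
    2 * (f t q * deriv (fun s => f s q) t) + 2 * (g t q * deriv (fun s => g s q) t)
        + 2 * (h t q * deriv (fun s => h s q) t) ≤
      2 * dissipativePower δ ν κ (u t) (w t) (f t) (g t) (h t) (P t) q
        + (2 * δ * m + 1) * (f t q ^ 2 + g t q ^ 2 + h t q ^ 2)
        + (Ru t q ^ 2 + Rw t q ^ 2 + Rb t q ^ 2) := by
  have hidentity := hE.sum_mul_deriv_eq ht hq
  have hstretching : -(f t q * advect (f t) (g t) (ua t) q + g t q * advect (f t) (g t) (wa t) q
      + h t q * advect (f t) (g t) (ba t) q) ≤ m * (f t q ^ 2 + g t q ^ 2 + h t q ^ 2) :=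
    (neg_mul_advect_le_gradNorm_mul q).trans
      (mul_le_mul_of_nonneg_right hm (by positivity))
  linarith [mul_le_mul_of_nonneg_left hstretching hδ, two_mul_le_add_sq (f t q) (Ru t q),
    two_mul_le_add_sq (g t q) (Rw t q), two_mul_le_add_sq (h t q) (Rb t q)]

lemma integrable_dissipativePower
    (hE : IsBoussinesqPerturbation α β δ ν κ T u w ua wa ba f g h P Ru Rw Rb)
    (ht : t ∈ Set.Ioo 0 T) (hu : MemLp (u t) ∞ halfPlane) (hw : MemLp (w t) ∞ halfPlane) :
    Integrable (dissipativePower δ ν κ (u t) (w t) (f t) (g t) (h t) (P t)) halfPlane := by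
  have hf := hE.regular_f.memW2 t ht
  have hg := hE.regular_g.memW2 t ht
  have hh := hE.regular_h.memW2 t ht
  have hpressure : Integrable (advect (f t) (g t) (P t)) halfPlane :=
    memLp_one_iff_integrable.1 ((hE.memW1_pressure t ht).memLp_advect hf.memLp hg.memLp)
  exact (((integrable_mul_advectionDiffusion δ ν hu hw hf).add
    (integrable_mul_advectionDiffusion δ ν hu hw hg)).add
    (integrable_mul_advectionDiffusion δ κ hu hw hh)).sub hpressure

lemma integral_dissipativePower_nonpos
    (hE : IsBoussinesqPerturbation α β δ ν κ T u w ua wa ba f g h P Ru Rw Rb)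
    (hν : 0 ≤ ν) (hκ : 0 ≤ κ) (ht : t ∈ Set.Ioo 0 T) (hu : MemW1 ∞ (u t)) (hw : MemW1 ∞ (w t))
    (hsol : IsSolenoidal (u t) (w t)) :
    ∫ q, dissipativePower δ ν κ (u t) (w t) (f t) (g t) (h t) (P t) q ∂halfPlane ≤ 0 := by
  have hf := hE.regular_f.memW2 t ht
  have hg := hE.regular_g.memW2 t ht
  have hh := hE.regular_h.memW2 t ht
  have hint_f := integrable_mul_advectionDiffusion δ ν hu.memLp hw.memLp hf
  have hint_g := integrable_mul_advectionDiffusion δ ν hu.memLp hw.memLp hg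
  have hint_h := integrable_mul_advectionDiffusion δ κ hu.memLp hw.memLp hh
  have hint_P : Integrable (advect (f t) (g t) (P t)) halfPlane :=
    memLp_one_iff_integrable.1 ((hE.memW1_pressure t ht).memLp_advect hf.memLp hg.memLp)
  have hpressure : ∫ q, advect (f t) (g t) (P t) q ∂halfPlane = 0 :=
    integral_advect_eq_zero hf.toMemW1 hg.toMemW1 (hE.memW1_pressure t ht) (hE.solenoidal t ht)
  have hnonpos_f := integral_mul_advectionDiffusion_nonpos hν δ hu hw hsol hf
    fun x => by rw [hE.boundary_f t ht, zero_mul]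
  have hnonpos_g := integral_mul_advectionDiffusion_nonpos hν δ hu hw hsol hg
    fun x => by rw [(hE.solenoidal t ht).normal_trace, zero_mul]
  have hnonpos_h := integral_mul_advectionDiffusion_nonpos hκ δ hu hw hsol hh
    fun x => by rw [hE.boundary_h t ht, mul_zero]
  have hsplit := (integral_sub ((hint_f.add hint_g).add hint_h) hint_P).trans
    (congrArg (· - _) (integral_add_add hint_f hint_g hint_h))
  exact hsplit.trans_le (by linarith)

lemma integral_deriv_le
    (hE : IsBoussinesqPerturbation α β δ ν κ T u w ua wa ba f g h P Ru Rw Rb)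
    (hδ : 0 ≤ δ) (hν : 0 ≤ ν) (hκ : 0 ≤ κ) (ht : t ∈ Set.Ioo 0 T) (hu : MemW1 ∞ (u t))
    (hw : MemW1 ∞ (w t)) (hsol : IsSolenoidal (u t) (w t)) (hRu : MemLp (Ru t) 2 halfPlane)
    (hRw : MemLp (Rw t) 2 halfPlane) (hRb : MemLp (Rb t) 2 halfPlane) {m : ℝ}
    (hm : ∀ q : ℝ × ℝ, 0 < q.2 → gradNorm (ua t) (wa t) (ba t) q ≤ m) :
    ∫ q, (2 * (f t q * deriv (fun s => f s q) t) + 2 * (g t q * deriv (fun s => g s q) t)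
        + 2 * (h t q * deriv (fun s => h s q) t)) ∂halfPlane ≤
      (2 * δ * m + 1) * energy (f t) (g t) (h t) + energy (Ru t) (Rw t) (Rb t) := by
  have hint_power := (hE.integrable_dissipativePower ht hu.memLp hw.memLp).const_mul 2
  have hint_energy := (integrable_sq_add_sq_add_sq (hE.regular_f.memW2 t ht).memLp
    (hE.regular_g.memW2 t ht).memLp (hE.regular_h.memW2 t ht).memLp).const_mul (2 * δ * m + 1)
  have hint_remainder := integrable_sq_add_sq_add_sq hRu hRw hRb
  have hmono := integral_mono_ae
    (((hE.regular_f.integrable_mul_deriv ht).add (hE.regular_g.integrable_mul_deriv ht)).add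
      (hE.regular_h.integrable_mul_deriv ht))
    ((hint_power.add hint_energy).add hint_remainder)
    (ae_halfPlane_snd_pos.mono fun q hq => hE.two_mul_sum_mul_deriv_le hδ ht hq (hm q hq))
  have hsplit := integral_add_add hint_power hint_energy hint_remainder
  rw [integral_const_mul, integral_const_mul] at hsplit
  refine (hmono.trans_eq hsplit).trans ?_
  gcongr ?_ + _
  exact add_le_of_nonpos_left
    (mul_nonpos_of_nonneg_of_nonpos zero_le_two
      (hE.integral_dissipativePower_nonpos hν hκ ht hu hw hsol))

theorem energy_le (hE : IsBoussinesqPerturbation α β δ ν κ T u w ua wa ba f g h P Ru Rw Rb)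
    (hδ : 0 ≤ δ) (hν : 0 ≤ ν) (hκ : 0 ≤ κ)
    (hu : ∀ t ∈ Set.Ioo 0 T, MemW1 ∞ (u t)) (hw : ∀ t ∈ Set.Ioo 0 T, MemW1 ∞ (w t))
    (hsol : ∀ t ∈ Set.Ioo 0 T, IsSolenoidal (u t) (w t))
    (hRu : IsL2Family (Set.Icc 0 T) Ru) (hRw : IsL2Family (Set.Icc 0 T) Rw)
    (hRb : IsL2Family (Set.Icc 0 T) Rb) {M : ℝ → ℝ} (hMc : ContinuousOn M (Set.Icc 0 T))
    (hM : ∀ t ∈ Set.Icc 0 T, ∀ q : ℝ × ℝ, 0 < q.2 → gradNorm (ua t) (wa t) (ba t) q ≤ M t)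
    (ht : t ∈ Set.Icc 0 T) :
    energy (f t) (g t) (h t) ≤
      (energy (f 0) (g 0) (h 0) + ∫ s in 0..t, energy (Ru s) (Rw s) (Rb s)) *
        Real.exp (∫ s in 0..t, (2 * δ * M s + 1)) := by
  have hM0 : ∀ s ∈ Set.Icc 0 T, 0 ≤ M s := fun s hs =>
    (Real.sqrt_nonneg _).trans (hM s hs (0, 1) one_pos)
  have hIcc : ∀ {s}, s ∈ Set.Ioo 0 T → s ∈ Set.Icc 0 T := fun hs => Set.Ioo_subset_Icc_self hs
  exact gronwall_integral_le (φ := fun t => energy (f t) (g t) (h t))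
    (continuousOn_energy hE.regular_f.toIsL2Family hE.regular_g.toIsL2Family
      hE.regular_h.toIsL2Family)
    (fun s hs => hasDerivAt_energy hE.regular_f hE.regular_g hE.regular_h hs)
    ((continuousOn_const.mul hMc).add continuousOn_const)
    (fun s hs => add_nonneg (mul_nonneg (mul_nonneg zero_le_two hδ) (hM0 s hs)) zero_le_one)
    (continuousOn_energy hRu hRw hRb) (fun s _ => energy_nonneg _ _ _)
    (fun s hs => hE.integral_deriv_le hδ hν hκ hs (hu s hs) (hw s hs) (hsol s hs)
      (hRu.memLp (hIcc hs)) (hRw.memLp (hIcc hs)) (hRb.memLp (hIcc hs)) (hM s (hIcc hs))) ht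

end IsBoussinesqPerturbation

theorem boussinesq_stability_estimate_general (hδ : 0 ≤ δ) (hν : 0 ≤ ν) (hκ : 0 ≤ κ)
    (hW : IsBoussinesqFlow α β δ ν κ T u w b p 0 0 0)
    (hWa : IsBoussinesqFlow α β δ ν κ T ua wa ba pa Ru Rw Rb)
    (hu : ∀ t ∈ Set.Ioo 0 T, MemW1 ∞ (u t)) (hw : ∀ t ∈ Set.Ioo 0 T, MemW1 ∞ (w t))
    (hRu : IsL2Family (Set.Icc 0 T) Ru) (hRw : IsL2Family (Set.Icc 0 T) Rw)
    (hRb : IsL2Family (Set.Icc 0 T) Rb) {M : ℝ → ℝ} (hMc : ContinuousOn M (Set.Icc 0 T))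
    (hM : ∀ t ∈ Set.Icc 0 T, ∀ q : ℝ × ℝ, 0 < q.2 → gradNorm (ua t) (wa t) (ba t) q ≤ M t)
    (ht : t ∈ Set.Icc 0 T) :
    energy (ua t - u t) (wa t - w t) (ba t - b t) ≤
      (energy (ua 0 - u 0) (wa 0 - w 0) (ba 0 - b 0)
        + ∫ s in 0..t, energy (Ru s) (Rw s) (Rb s)) *
        Real.exp (∫ s in 0..t, (2 * δ * M s + 1)) :=
  (hWa.sub hW).energy_le hδ hν hκ hu hw hW.solenoidal hRu hRw hRb hMc hM ht

end Boussinesq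

section UniformDecay

lemma memLp_const_div_one_add_norm_pow {E : Type*} [NormedAddCommGroup E] [NormedSpace ℝ E]
    [FiniteDimensional ℝ E] [MeasurableSpace E] [BorelSpace E] (μ : Measure E)
    [μ.IsAddHaarMeasure] {p : ℝ≥0∞} (hp : 1 ≤ p) {n : ℕ} (hn : Module.finrank ℝ E < n) (C : ℝ) :
    MemLp (fun x => C / (1 + ‖x‖) ^ n) p μ := by
  simp only [div_eq_mul_inv]
  refine MemLp.const_mul ?_ C
  have hpos : ∀ x : E, 0 < 1 + ‖x‖ := fun x => by positivity
  have hmeas : AEStronglyMeasurable (fun x : E => ((1 + ‖x‖) ^ n)⁻¹) μ := by fun_prop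
  obtain rfl | hp_top := eq_or_ne p ∞
  · refine memLp_top_of_bound hmeas 1 (.of_forall fun x => ?_)
    rw [Real.norm_of_nonneg (by positivity)]
    exact inv_le_one_of_one_le₀ (one_le_pow₀ (le_add_of_nonneg_right (norm_nonneg x)))
  have hp1 : 1 ≤ p.toReal := by simpa using ENNReal.toReal_mono hp_top hp
  rw [← integrable_norm_rpow_iff hmeas (zero_lt_one.trans_le hp).ne' hp_top]
  have hexponent : (Module.finrank ℝ E : ℝ) < n * p.toReal :=
    (Nat.cast_lt.2 hn).trans_le (le_mul_of_one_le_right n.cast_nonneg hp1)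
  refine (integrable_one_add_norm hexponent).congr (.of_forall fun x => ?_)
  simp only [norm_inv, norm_pow, Real.norm_of_nonneg (hpos x).le]
  rw [Real.rpow_neg (hpos x).le, Real.rpow_mul (hpos x).le, Real.rpow_natCast,
    Real.inv_rpow (by positivity)]

lemma norm_fderiv_fderiv_apply_le {E F : Type*} [NormedAddCommGroup E] [NormedSpace ℝ E]
    [NormedAddCommGroup F] [NormedSpace ℝ F] {f : E → F} {x v : E}
    (hf : DifferentiableAt ℝ (fderiv ℝ f) x) (hv : ‖v‖ ≤ 1) :
    ‖fderiv ℝ (fun y => fderiv ℝ f y v) x‖ ≤ ‖fderiv ℝ (fderiv ℝ f) x‖ := by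
  have hflip : fderiv ℝ (fun y => fderiv ℝ f y v) x = (fderiv ℝ (fderiv ℝ f) x).flip v := by
    simp [fderiv_clm_apply hf (differentiableAt_const v)]
  rw [hflip, ← (fderiv ℝ (fderiv ℝ f) x).opNorm_flip]
  exact ContinuousLinearMap.unit_le_opNorm _ _ hv

variable {p : ℝ≥0∞} {f m : ℝ × ℝ → ℝ}

lemma MemW1.of_norm_le (hm : MemLp m p halfPlane) (hf : Differentiable ℝ f)
    (hfm : ∀ q, |f q| ≤ m q) (hfm' : ∀ q, ‖fderiv ℝ f q‖ ≤ m q) : MemW1 p f where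
  differentiable := hf
  memLp := hm.mono' hf.continuous.aestronglyMeasurable (.of_forall hfm)
  memLp_pdx := hm.mono' (measurable_fderiv_apply_const ℝ f (1, 0)).aestronglyMeasurable
    (.of_forall fun q => ((fderiv ℝ f q).unit_le_opNorm _ (by simp)).trans (hfm' q))
  memLp_pdy := hm.mono' (measurable_fderiv_apply_const ℝ f (0, 1)).aestronglyMeasurable
    (.of_forall fun q => ((fderiv ℝ f q).unit_le_opNorm _ (by simp)).trans (hfm' q))

lemma MemW2.of_norm_le (hm : MemLp m p halfPlane) (hf : Differentiable ℝ f)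
    (hf' : Differentiable ℝ (fderiv ℝ f)) (hfm : ∀ q, |f q| ≤ m q)
    (hfm' : ∀ q, ‖fderiv ℝ f q‖ ≤ m q) (hfm'' : ∀ q, ‖fderiv ℝ (fderiv ℝ f) q‖ ≤ m q) :
    MemW2 p f where
  toMemW1 := .of_norm_le hm hf hfm hfm'
  memW1_pdx := .of_norm_le hm (hf'.clm_apply (differentiable_const _))
    (fun q => ((fderiv ℝ f q).unit_le_opNorm _ (by simp)).trans (hfm' q))
    fun q => (norm_fderiv_fderiv_apply_le (hf' q) (by simp)).trans (hfm'' q)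
  memW1_pdy := .of_norm_le hm (hf'.clm_apply (differentiable_const _))
    (fun q => ((fderiv ℝ f q).unit_le_opNorm _ (by simp)).trans (hfm' q))
    fun q => (norm_fderiv_fderiv_apply_le (hf' q) (by simp)).trans (hfm'' q)

lemma memLp_quartic {p : ℝ≥0∞} (hp : 1 ≤ p) (C : ℝ) :
    MemLp (fun q : ℝ × ℝ => C / (1 + ‖q‖) ^ 4) p halfPlane :=
  (memLp_const_div_one_add_norm_pow volume hp (by simp) C).restrict _

variable {S : Set ℝ} {T C t : ℝ} {f : ℝ → ℝ × ℝ → ℝ}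

lemma IsL2Family.of_quartic_le (hc : Continuous (uncurry f))
    (hf : ∀ t ∈ S, ∀ q, |f t q| ≤ C / (1 + ‖q‖) ^ 4) : IsL2Family S f :=
  ⟨hc, _, memLp_quartic one_le_two C, hf⟩

lemma DecaysUniformly.memW1 (hf : DecaysUniformly T C f) (hd : Differentiable ℝ (f t))
    (ht : t ∈ Set.Icc 0 T) (hp : 1 ≤ p) : MemW1 p (f t) :=
  .of_norm_le (memLp_quartic hp C) hd (fun q => (hf t ht q).1) fun q => (hf t ht q).2.1

lemma DecaysUniformly.energyRegular (hf : DecaysUniformly T C f)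
    (hc : ContDiff ℝ 2 (uncurry f)) : EnergyRegular T f where
  toIsL2Family := .of_quartic_le hc.continuous fun t ht q => (hf t ht q).1
  differentiableAt t _ q := ((hc.differentiable two_ne_zero).comp
    (differentiable_id.prodMk (differentiable_const q))).differentiableAt (x := t)
  dominated_deriv := ⟨_, memLp_quartic one_le_two C, fun t ht q =>
    (hf t (Set.Ioo_subset_Icc_self ht) q).2.2.2⟩
  memW2 t ht := by
    have hslice : ContDiff ℝ 2 (f t) := hc.comp (contDiff_prodMk_right t)
    have hbound := hf t (Set.Ioo_subset_Icc_self ht)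
    exact .of_norm_le (memLp_quartic one_le_two C) (hslice.differentiable two_ne_zero)
      ((hslice.fderiv_right (m := 1) le_rfl).differentiable one_ne_zero)
      (fun q => (hbound q).1) (fun q => (hbound q).2.1) fun q => (hbound q).2.2.1

lemma DecaysUniformly.isBoussinesqFlow {α β δ ν κ : ℝ} {u w b p Ru Rw Rb : ℝ → ℝ × ℝ → ℝ}
    (hu : DecaysUniformly T C u) (hw : DecaysUniformly T C w) (hb : DecaysUniformly T C b)
    (hp : DecaysUniformly T C p) (hsu : ContDiff ℝ 2 (uncurry u))
    (hsw : ContDiff ℝ 2 (uncurry w)) (hsb : ContDiff ℝ 2 (uncurry b))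
    (hsp : ContDiff ℝ 1 (uncurry p))
    (hequ : ∀ t ∈ Set.Icc 0 T, ∀ q : ℝ × ℝ, 0 ≤ q.2 →
      deriv (fun s => u s q) t + δ * (u t q * pdx (u t) q + w t q * pdy (u t) q)
          - α * b t q + pdx (p t) q = ν * lap (u t) q + Ru t q)
    (heqw : ∀ t ∈ Set.Icc 0 T, ∀ q : ℝ × ℝ, 0 ≤ q.2 →
      deriv (fun s => w s q) t + δ * (u t q * pdx (w t) q + w t q * pdy (w t) q)
          - β * b t q + pdy (p t) q = ν * lap (w t) q + Rw t q)
    (heqb : ∀ t ∈ Set.Icc 0 T, ∀ q : ℝ × ℝ, 0 ≤ q.2 →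
      deriv (fun s => b s q) t + δ * (u t q * pdx (b t) q + w t q * pdy (b t) q)
          + α * u t q + β * w t q = κ * lap (b t) q + Rb t q)
    (hdiv : ∀ t ∈ Set.Icc 0 T, ∀ q : ℝ × ℝ, 0 ≤ q.2 → pdx (u t) q + pdy (w t) q = 0)
    (hbc : ∀ t ∈ Set.Icc 0 T, ∀ x : ℝ, u t (x, 0) = 0 ∧ w t (x, 0) = 0 ∧ pdy (b t) (x, 0) = 0) :
    IsBoussinesqFlow α β δ ν κ T u w b p Ru Rw Rb where
  regular_u := hu.energyRegular hsu
  regular_w := hw.energyRegular hsw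
  regular_b := hb.energyRegular hsb
  memW1_pressure t ht := hp.memW1 ((hsp.comp (contDiff_prodMk_right t)).differentiable one_ne_zero)
    (Set.Ioo_subset_Icc_self ht) one_le_two
  equation_u t ht q hq := by
    simp only [advectionDiffusion, advect]
    linear_combination hequ t (Set.Ioo_subset_Icc_self ht) q hq.le
  equation_w t ht q hq := by
    simp only [advectionDiffusion, advect]
    linear_combination heqw t (Set.Ioo_subset_Icc_self ht) q hq.le
  equation_b t ht q hq := by
    simp only [advectionDiffusion, advect]
    linear_combination heqb t (Set.Ioo_subset_Icc_self ht) q hq.le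
  solenoidal t ht := ⟨fun q hq => hdiv t (Set.Ioo_subset_Icc_self ht) q hq.le,
    fun x => (hbc t (Set.Ioo_subset_Icc_self ht) x).2.1⟩
  boundary_u t ht x := (hbc t (Set.Ioo_subset_Icc_self ht) x).1
  boundary_b t ht x := (hbc t (Set.Ioo_subset_Icc_self ht) x).2.2

end UniformDecay

/-- **L² stability (Gronwall) estimate for the weakly nonlinear viscous Boussinesq
system.**  If `𝒲 = (u,w,b)` is an exact solution and `𝒲ₐ = (uₐ,wₐ,bₐ)` solves the same
system up to a remainder `R = (Ru,Rw,Rb)`, both divergence free and satisfying the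
boundary conditions, and if `M s` dominates `‖∇𝒲ₐ(s)‖_{L^∞}`, then
`‖(𝒲ₐ−𝒲)(t)‖²_{L²} ≤ (‖(𝒲ₐ−𝒲)(0)‖²_{L²} + ∫₀ᵗ‖R‖²_{L²}) exp(∫₀ᵗ(2δ‖∇𝒲ₐ‖_∞ + 1))`. -/
theorem boussinesq_stability_estimate
    (γ δ ν₀ κ₀ ε T : ℝ) (hγ : γ ∈ Set.Ioo 0 (Real.pi / 2)) (hδ : 0 ≤ δ)
    (hν₀ : 0 < ν₀) (hκ₀ : 0 < κ₀) (hε : 0 < ε) (hT : 0 < T)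
    (u w b p ua wa ba pa Ru Rw Rb : ℝ → ℝ × ℝ → ℝ)
    (hsu : ContDiff ℝ (⊤ : ℕ∞) (uncurry u)) (hsw : ContDiff ℝ (⊤ : ℕ∞) (uncurry w))
    (hsb : ContDiff ℝ (⊤ : ℕ∞) (uncurry b)) (hsp : ContDiff ℝ (⊤ : ℕ∞) (uncurry p))
    (hsua : ContDiff ℝ (⊤ : ℕ∞) (uncurry ua)) (hswa : ContDiff ℝ (⊤ : ℕ∞) (uncurry wa))
    (hsba : ContDiff ℝ (⊤ : ℕ∞) (uncurry ba)) (hspa : ContDiff ℝ (⊤ : ℕ∞) (uncurry pa))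
    (hsRu : Continuous (uncurry Ru)) (hsRw : Continuous (uncurry Rw))
    (hsRb : Continuous (uncurry Rb))
    (hdecay : ∃ C : ℝ, DecaysUniformly T C u ∧ DecaysUniformly T C w ∧
      DecaysUniformly T C b ∧ DecaysUniformly T C p ∧
      DecaysUniformly T C ua ∧ DecaysUniformly T C wa ∧
      DecaysUniformly T C ba ∧ DecaysUniformly T C pa)
    (hRdecay : ∃ C : ℝ, ∀ t ∈ Set.Icc 0 T, ∀ q : ℝ × ℝ,
      |Ru t q| ≤ C / (1 + ‖q‖) ^ 4 ∧ |Rw t q| ≤ C / (1 + ‖q‖) ^ 4 ∧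
      |Rb t q| ≤ C / (1 + ‖q‖) ^ 4)
    -- the exact solution
    (hequ : ∀ t ∈ Set.Icc 0 T, ∀ q : ℝ × ℝ, 0 ≤ q.2 →
      deriv (fun s => u s q) t + δ * (u t q * pdx (u t) q + w t q * pdy (u t) q)
          - Real.sin γ * b t q + pdx (p t) q = ν₀ * ε ^ 6 * lap (u t) q)
    (heqw : ∀ t ∈ Set.Icc 0 T, ∀ q : ℝ × ℝ, 0 ≤ q.2 →
      deriv (fun s => w s q) t + δ * (u t q * pdx (w t) q + w t q * pdy (w t) q)
          - Real.cos γ * b t q + pdy (p t) q = ν₀ * ε ^ 6 * lap (w t) q)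
    (heqb : ∀ t ∈ Set.Icc 0 T, ∀ q : ℝ × ℝ, 0 ≤ q.2 →
      deriv (fun s => b s q) t + δ * (u t q * pdx (b t) q + w t q * pdy (b t) q)
          + Real.sin γ * u t q + Real.cos γ * w t q = κ₀ * ε ^ 6 * lap (b t) q)
    (hdiv : ∀ t ∈ Set.Icc 0 T, ∀ q : ℝ × ℝ, 0 ≤ q.2 → pdx (u t) q + pdy (w t) q = 0)
    (hbc : ∀ t ∈ Set.Icc 0 T, ∀ x : ℝ,
      u t (x, 0) = 0 ∧ w t (x, 0) = 0 ∧ pdy (b t) (x, 0) = 0)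
    -- the approximate solution, solving the system with remainder R
    (hequa : ∀ t ∈ Set.Icc 0 T, ∀ q : ℝ × ℝ, 0 ≤ q.2 →
      deriv (fun s => ua s q) t + δ * (ua t q * pdx (ua t) q + wa t q * pdy (ua t) q)
          - Real.sin γ * ba t q + pdx (pa t) q = ν₀ * ε ^ 6 * lap (ua t) q + Ru t q)
    (heqwa : ∀ t ∈ Set.Icc 0 T, ∀ q : ℝ × ℝ, 0 ≤ q.2 →
      deriv (fun s => wa s q) t + δ * (ua t q * pdx (wa t) q + wa t q * pdy (wa t) q)
          - Real.cos γ * ba t q + pdy (pa t) q = ν₀ * ε ^ 6 * lap (wa t) q + Rw t q)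
    (heqba : ∀ t ∈ Set.Icc 0 T, ∀ q : ℝ × ℝ, 0 ≤ q.2 →
      deriv (fun s => ba s q) t + δ * (ua t q * pdx (ba t) q + wa t q * pdy (ba t) q)
          + Real.sin γ * ua t q + Real.cos γ * wa t q = κ₀ * ε ^ 6 * lap (ba t) q + Rb t q)
    (hdiva : ∀ t ∈ Set.Icc 0 T, ∀ q : ℝ × ℝ, 0 ≤ q.2 → pdx (ua t) q + pdy (wa t) q = 0)
    (hbca : ∀ t ∈ Set.Icc 0 T, ∀ x : ℝ,
      ua t (x, 0) = 0 ∧ wa t (x, 0) = 0 ∧ pdy (ba t) (x, 0) = 0)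
    -- `M s` dominates the `L^∞` norm of the gradient of the approximate solution
    (M : ℝ → ℝ) (hMc : Continuous M) (hM0 : ∀ s, 0 ≤ M s)
    (hM : ∀ s ∈ Set.Icc 0 T, ∀ q : ℝ × ℝ, 0 ≤ q.2 →
      Real.sqrt ((pdx (ua s) q) ^ 2 + (pdy (ua s) q) ^ 2
        + (pdx (wa s) q) ^ 2 + (pdy (wa s) q) ^ 2
        + (pdx (ba s) q) ^ 2 + (pdy (ba s) q) ^ 2) ≤ M s) :
    ∀ t ∈ Set.Icc 0 T,
      (∫ q, ((ua t q - u t q) ^ 2 + (wa t q - w t q) ^ 2 + (ba t q - b t q) ^ 2)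
          ∂halfPlane)
        ≤ ((∫ q, ((ua 0 q - u 0 q) ^ 2 + (wa 0 q - w 0 q) ^ 2 + (ba 0 q - b 0 q) ^ 2)
              ∂halfPlane)
            + ∫ s in (0 : ℝ)..t,
                ∫ q, ((Ru s q) ^ 2 + (Rw s q) ^ 2 + (Rb s q) ^ 2) ∂halfPlane)
          * Real.exp (∫ s in (0 : ℝ)..t, (2 * δ * M s + 1)) := by
  obtain ⟨C, hu, hw, hb, hp, hua, hwa, hba, hpa⟩ := hdecay
  obtain ⟨K, hR⟩ := hRdecay
  have hW : IsBoussinesqFlow (Real.sin γ) (Real.cos γ) δ (ν₀ * ε ^ 6) (κ₀ * ε ^ 6) T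
      u w b p 0 0 0 :=
    hu.isBoussinesqFlow hw hb hp (hsu.of_le ENat.LEInfty.out) (hsw.of_le ENat.LEInfty.out)
      (hsb.of_le ENat.LEInfty.out) (hsp.of_le ENat.LEInfty.out) (by simpa using hequ)
      (by simpa using heqw) (by simpa using heqb) hdiv hbc
  have hWa : IsBoussinesqFlow (Real.sin γ) (Real.cos γ) δ (ν₀ * ε ^ 6) (κ₀ * ε ^ 6) T
      ua wa ba pa Ru Rw Rb :=
    hua.isBoussinesqFlow hwa hba hpa (hsua.of_le ENat.LEInfty.out) (hswa.of_le ENat.LEInfty.out)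
      (hsba.of_le ENat.LEInfty.out) (hspa.of_le ENat.LEInfty.out) hequa heqwa heqba hdiva hbca
  exact fun t ht => boussinesq_stability_estimate_general hδ (by positivity) (by positivity) hW hWa
    (fun s hs => hu.memW1 (hW.regular_u.memW2 s hs).differentiable (Set.Ioo_subset_Icc_self hs)
      le_top)
    (fun s hs => hw.memW1 (hW.regular_w.memW2 s hs).differentiable (Set.Ioo_subset_Icc_self hs)
      le_top)
    (.of_quartic_le hsRu fun s hs q => (hR s hs q).1)
    (.of_quartic_le hsRw fun s hs q => (hR s hs q).2.1)
    (.of_quartic_le hsRb fun s hs q => (hR s hs q).2.2)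
    hMc.continuousOn (fun s hs q hq => hM s hs q hq.le) ht
end
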